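/- Let c = 1(π_1 ≤ π_2) on [0,1]². Then Q(c) > 0 for every σ-additive probability measure Q on ℬ([0,1]²) with both marginals equal to Lebesgue measure m, while inf_{Q ∈ Γ} Q(c) = 0; hence the infimum of Q(c) over σ-additive couplings is not attained. In contrast, inf_{Q ∈ M} Q(c) = 0 is attained by some finitely additive P ∈ M, namely any P ∈ M with P(π_1 > π_2) = 1. -/

import Mathlib

open MeasureTheory Set ENNReal

namespace FATransport

variable {α : Type*} [MeasurableSpace α]

/-- The collection of measurable sets of `α` (the σ-field `𝒜`), as a type. -/
abbrev MSet (α : Type*) [MeasurableSpace α] := {A : Set α // MeasurableSet A}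

/-- A finitely additive probability on the σ-field of `α`, viewed as an element
of `[0,1]^𝒜`: it maps the whole space to `1` and is additive on disjoint pairs. -/
def IsFAP (P : MSet α → unitInterval) : Prop :=
  (P ⟨Set.univ, MeasurableSet.univ⟩ : ℝ) = 1 ∧
    ∀ A B : MSet α, Disjoint A.1 B.1 →
      (P ⟨A.1 ∪ B.1, A.2.union B.2⟩ : ℝ) = (P A : ℝ) + (P B : ℝ)

/-- Integral of a simple function with respect to a finitely additive set function. -/
noncomputable def simpleInt (P : MSet α → unitInterval) (s : SimpleFunc α ℝ) : ℝ :=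
  ∑ y ∈ s.range, y * (P ⟨(⇑s) ⁻¹' {y}, s.measurableSet_fiber y⟩ : ℝ)

/-- `P(f)` for a bounded measurable `f : α → ℝ`: the supremum of the integrals of
simple functions below `f` (for a f.a.p. `P` and bounded measurable `f` this agrees
with the integral defined by uniform approximation by simple functions). -/
noncomputable def fapInt (P : MSet α → unitInterval) (f : α → ℝ) : ℝ :=
  sSup (simpleInt P '' {s : SimpleFunc α ℝ | ∀ x, s x ≤ f x})

/-- `P(c) = sup_k P(c ∧ k)` for a `[0,∞]`-valued `c`. -/
noncomputable def fapIntTop (P : MSet α → unitInterval) (c : α → ℝ≥0∞) : ℝ≥0∞ :=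
  ⨆ k : ℕ, ENNReal.ofReal (fapInt P (fun x => (c x ⊓ (k : ℝ≥0∞)).toReal))

/-- `P(f) = P(f⁺) - P(f⁻)` for a (`P`-integrable) real-valued `f`. -/
noncomputable def fapIntR (P : MSet α → unitInterval) (f : α → ℝ) : ℝ :=
  (fapIntTop P (fun x => ENNReal.ofReal (f x))).toReal -
    (fapIntTop P (fun x => ENNReal.ofReal (-f x))).toReal

/-- Lebesgue measure `m` on `ℬ([0,1])`. -/
noncomputable def mI : Measure unitInterval := volume

/-- The diagonal coupling `T ∈ Γ`, i.e. the image of `m` under `x ↦ (x,x)`. -/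
noncomputable def TI : Measure (unitInterval × unitInterval) :=
  mI.map (fun x => (x, x))

/-- `P` has both marginals equal to Lebesgue measure `m` on `[0,1]`. -/
def HasLebesgueMarginals (P : MSet (unitInterval × unitInterval) → unitInterval) : Prop :=
  (∀ (B : Set unitInterval) (hB : MeasurableSet B),
    (P ⟨Prod.fst ⁻¹' B, measurable_fst hB⟩ : ℝ) = (mI B).toReal) ∧
  (∀ (B : Set unitInterval) (hB : MeasurableSet B),
    (P ⟨Prod.snd ⁻¹' B, measurable_snd hB⟩ : ℝ) = (mI B).toReal)

/-- The set `{(x,y) ∈ [0,1]² : x > y}`. -/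
def Sgt : Set (unitInterval × unitInterval) := {p | (p.2 : ℝ) < (p.1 : ℝ)}

/-- The set `{(x,y) ∈ [0,1]² : x < y}`. -/
def Slt : Set (unitInterval × unitInterval) := {p | (p.1 : ℝ) < (p.2 : ℝ)}

/-- The set `{(x,y) ∈ [0,1]² : x ≤ y}`. -/
def Sle : Set (unitInterval × unitInterval) := {p | (p.1 : ℝ) ≤ (p.2 : ℝ)}

/-- The diagonal `{(x,y) ∈ [0,1]² : x = y}`. -/
def Sdiag : Set (unitInterval × unitInterval) := {p | (p.1 : ℝ) = (p.2 : ℝ)}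

lemma measSgt : MeasurableSet Sgt :=
  measurableSet_lt (measurable_subtype_coe.comp measurable_snd)
    (measurable_subtype_coe.comp measurable_fst)

lemma measSlt : MeasurableSet Slt :=
  measurableSet_lt (measurable_subtype_coe.comp measurable_fst)
    (measurable_subtype_coe.comp measurable_snd)

lemma measSle : MeasurableSet Sle :=
  measurableSet_le (measurable_subtype_coe.comp measurable_fst)
    (measurable_subtype_coe.comp measurable_snd)

lemma measSdiag : MeasurableSet Sdiag :=
  measurableSet_eq_fun (measurable_subtype_coe.comp measurable_fst)
    (measurable_subtype_coe.comp measurable_snd)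

end FATransport

namespace FATransport

/-!
If `X` and `Y` have the same law and `X ≤ Y` almost surely, then for every `q` the event `{q < X}`
is contained in `{q < Y}` and has the same probability, so the two agree almost surely. Letting `q`
range over a countable dense set gives `X = Y` almost surely; this is where σ-additivity enters.
Hence no σ-additive coupling lives on `{π₁ > π₂}`.

Rotating the circle `ℝ/ℤ ≃ (0, 1]` by `-ε` gives a coupling under which `π₂ = π₁ - ε` unless
`π₁ ≤ ε`, so that `{π₁ ≤ π₂}` has probability at most `ε`. The finitely additive couplings form a
compact subset of `[0,1]^𝒜` containing the σ-additive ones, on which evaluation at `{π₁ ≤ π₂}` is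
continuous; its minimum is attained, and is at most every `ε > 0`.
-/

open Filter ProbabilityTheory

section IdentDistrib

variable {Ω γ : Type*} [MeasurableSpace Ω] {μ : Measure Ω} [IsFiniteMeasure μ]
  [LinearOrder γ] [DenselyOrdered γ] [TopologicalSpace γ] [OrderTopology γ]
  [TopologicalSpace.SeparableSpace γ] [MeasurableSpace γ] [OpensMeasurableSpace γ] {X Y : Ω → γ}

lemma ae_eq_of_identDistrib_of_ae_le (hXY : IdentDistrib X Y μ μ) (hle : X ≤ᵐ[μ] Y) :
    X =ᵐ[μ] Y := by
  obtain ⟨D, hD_countable, hD_dense⟩ := TopologicalSpace.exists_countable_dense γ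
  have hlt_of_lt : ∀ q ∈ D, ∀ᵐ ω ∂μ, q < Y ω → q < X ω := by
    intro q _
    have h_ae_eq : X ⁻¹' Ioi q =ᵐ[μ] Y ⁻¹' Ioi q :=
      ae_eq_of_ae_subset_of_measure_ge (hle.mono fun ω hω hq ↦ lt_of_lt_of_le hq hω)
        (hXY.measure_mem_eq measurableSet_Ioi).ge
        (hXY.aemeasurable_fst.nullMeasurableSet_preimage measurableSet_Ioi) (measure_ne_top μ _)
    exact h_ae_eq.symm.le
  filter_upwards [hle, (ae_ball_iff hD_countable).2 hlt_of_lt] with ω hω hD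
  refine hω.antisymm (not_lt.1 fun hlt ↦ ?_)
  obtain ⟨q, hqD, hXq, hqY⟩ := hD_dense.exists_between hlt
  exact hXq.not_gt (hD q hqD hqY)

lemma measure_setOf_le_pos_of_identDistrib [NeZero μ] (hXY : IdentDistrib X Y μ μ) :
    0 < μ {ω | X ω ≤ Y ω} := by
  refine pos_iff_ne_zero.2 fun hzero ↦ NeZero.ne μ ?_
  have hlt : ∀ᵐ ω ∂μ, Y ω < X ω := by simpa only [ae_iff, not_lt] using hzero
  have heq : Y =ᵐ[μ] X := ae_eq_of_identDistrib_of_ae_le hXY.symm (hlt.mono fun _ ↦ le_of_lt)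
  have hfalse : ∀ᵐ _ ∂μ, False := by
    filter_upwards [hlt, heq] with ω hω hω' using hω.ne hω'
  rwa [eventually_false_iff_eq_bot, ae_eq_bot] at hfalse

end IdentDistrib

section FinitelyAdditive

variable {α : Type*} [MeasurableSpace α]

lemma IsFAP.apply_compl {P : MSet α → unitInterval} (hP : IsFAP P) (A : MSet α) :
    (P ⟨A.1ᶜ, A.2.compl⟩ : ℝ) = 1 - P A := by
  have hadd := hP.2 A ⟨A.1ᶜ, A.2.compl⟩ disjoint_compl_right
  simp only [union_compl_self, hP.1] at hadd
  linarith

lemma continuous_apply_coe (A : MSet α) :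
    Continuous fun P : MSet α → unitInterval ↦ (P A : ℝ) :=
  continuous_subtype_val.comp (continuous_apply A)

lemma isClosed_setOf_isFAP : IsClosed {P : MSet α → unitInterval | IsFAP P} := by
  simp only [IsFAP, ofPred_and, ofPred_forall]
  exact (isClosed_eq (continuous_apply_coe _) continuous_const).inter <|
    isClosed_iInter fun A ↦ isClosed_iInter fun B ↦ isClosed_iInter fun _ ↦
      isClosed_eq (continuous_apply_coe _) ((continuous_apply_coe A).add (continuous_apply_coe B))

/-- The finitely additive probability underlying a probability measure; it realises the inclusion
of the σ-additive probabilities into `[0,1]^𝒜`. -/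
noncomputable def toFAP (μ : Measure α) [IsProbabilityMeasure μ] (A : MSet α) : unitInterval :=
  ⟨μ.real A.1, measureReal_nonneg, measureReal_le_one⟩

lemma isFAP_toFAP (μ : Measure α) [IsProbabilityMeasure μ] : IsFAP (toFAP μ) :=
  ⟨probReal_univ, fun _ B hAB ↦ measureReal_union hAB B.2⟩

end FinitelyAdditive

lemma isClosed_setOf_hasLebesgueMarginals : IsClosed {P | HasLebesgueMarginals P} := by
  simp only [HasLebesgueMarginals, ofPred_and, ofPred_forall]
  exact (isClosed_iInter fun _ ↦ isClosed_iInter fun _ ↦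
    isClosed_eq (continuous_apply_coe _) continuous_const).inter
    (isClosed_iInter fun _ ↦ isClosed_iInter fun _ ↦
      isClosed_eq (continuous_apply_coe _) continuous_const)

/-- The set `Γ` of σ-additive couplings of Lebesgue measure with itself. -/
def sigmaAdditiveCouplings : Set (Measure (unitInterval × unitInterval)) :=
  {Q | IsProbabilityMeasure Q ∧ Q.map Prod.fst = mI ∧ Q.map Prod.snd = mI}

/-- The set `M` of finitely additive couplings of Lebesgue measure with itself, as a subset of
`[0,1]^𝒜` with the product topology. -/
def finitelyAdditiveCouplings : Set (MSet (unitInterval × unitInterval) → unitInterval) :=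
  {P | IsFAP P ∧ HasLebesgueMarginals P}

lemma isCompact_finitelyAdditiveCouplings : IsCompact finitelyAdditiveCouplings :=
  (isClosed_setOf_isFAP.inter isClosed_setOf_hasLebesgueMarginals).isCompact

lemma toFAP_mem_finitelyAdditiveCouplings {Q : Measure (unitInterval × unitInterval)}
    [IsProbabilityMeasure Q] (hfst : Q.map Prod.fst = mI) (hsnd : Q.map Prod.snd = mI) :
    toFAP Q ∈ finitelyAdditiveCouplings := by
  refine ⟨isFAP_toFAP Q, fun B hB ↦ ?_, fun B hB ↦ ?_⟩
  · rw [← hfst, Measure.map_apply measurable_fst hB]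
    rfl
  · rw [← hsnd, Measure.map_apply measurable_snd hB]
    rfl

lemma measure_Sle_pos {Q : Measure (unitInterval × unitInterval)}
    (hQ : Q ∈ sigmaAdditiveCouplings) : 0 < Q Sle := by
  obtain ⟨hprob, hfst, hsnd⟩ := hQ
  have hident : IdentDistrib Prod.fst Prod.snd Q Q :=
    ⟨measurable_fst.aemeasurable, measurable_snd.aemeasurable, hfst.trans hsnd.symm⟩
  exact measure_setOf_le_pos_of_identDistrib (hident.comp measurable_subtype_coe)

/-- The coordinate of a point of the circle `ℝ/ℤ` in the fundamental domain `(0, 1]`,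
through which rotations of the circle act on `[0,1]`. -/
noncomputable def circleCoord (t : UnitAddCircle) : unitInterval :=
  inclusion (by simpa only [zero_add] using Ioc_subset_Icc_self) (AddCircle.equivIoc (1 : ℝ) 0 t)

lemma measurePreserving_circleCoord : MeasurePreserving circleCoord volume mI := by
  have hmeas : Measurable circleCoord :=
    (measurable_subtype_coe.comp (AddCircle.measurableEquivIoc (1 : ℝ) 0).measurable).subtype_mk
  refine ⟨hmeas, unitInterval.measurableEmbedding_coe.map_injective ?_⟩
  have hcoe : MeasurePreserving (fun t ↦ (circleCoord t : ℝ)) volume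
      (volume.restrict (Ioc (0 : ℝ) (0 + 1))) :=
    (measurePreserving_subtype_coe measurableSet_Ioc).comp
      (AddCircle.measurePreserving_equivIoc (T := (1 : ℝ)) (a := 0))
  calc (volume.map circleCoord).map ((↑) : unitInterval → ℝ)
      = volume.restrict (Ioc (0 : ℝ) (0 + 1)) :=
        (Measure.map_map measurable_subtype_coe hmeas).trans hcoe.map_eq
    _ = volume.restrict unitInterval := by rw [zero_add, restrict_Ioc_eq_restrict_Icc]
    _ = mI.map ((↑) : unitInterval → ℝ) := unitInterval.measurePreserving_coe.map_eq.symm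

lemma circleCoord_sub_lt {ε : ℝ} (hε : 0 < ε) {t : UnitAddCircle} (ht : ε < circleCoord t) :
    circleCoord (t - ε) < circleCoord t := by
  have hlift : ((circleCoord t : ℝ) : UnitAddCircle) = t :=
    AddCircle.coe_equivIoc (p := (1 : ℝ)) (a := 0)
  have hmem : (circleCoord t : ℝ) - ε ∈ Ioc (0 : ℝ) (0 + 1) :=
    ⟨by linarith, by linarith [(circleCoord t).2.2]⟩
  have hcoord : (circleCoord (t - ε) : ℝ) = circleCoord t - ε := by
    nth_rw 1 [← hlift]
    rw [← AddCircle.coe_sub]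
    exact AddCircle.equivIoc_coe_of_mem hmem
  rw [← Subtype.coe_lt_coe, hcoord]
  linarith

lemma measurePreserving_circleCoord_sub (ε : ℝ) :
    MeasurePreserving (fun t : UnitAddCircle ↦ circleCoord (t - ε)) volume mI :=
  measurePreserving_circleCoord.comp (measurePreserving_sub_right volume (ε : UnitAddCircle))

lemma measurable_circleCoord_prodMk (ε : ℝ) :
    Measurable fun t : UnitAddCircle ↦ (circleCoord t, circleCoord (t - ε)) :=
  measurePreserving_circleCoord.measurable.prodMk (measurePreserving_circleCoord_sub ε).measurable

/-- The joint law of `(U, U - ε mod 1)`, with `U` uniform and residues taken in `(0, 1]`: a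
σ-additive coupling giving `{π₁ ≤ π₂}` little mass for small `ε > 0`. -/
noncomputable def rotationCoupling (ε : ℝ) : Measure (unitInterval × unitInterval) :=
  (volume : Measure UnitAddCircle).map fun t ↦ (circleCoord t, circleCoord (t - ε))

lemma rotationCoupling_mem_sigmaAdditiveCouplings (ε : ℝ) :
    rotationCoupling ε ∈ sigmaAdditiveCouplings := by
  have : IsProbabilityMeasure (volume : Measure UnitAddCircle) := ⟨UnitAddCircle.measure_univ⟩
  refine ⟨Measure.isProbabilityMeasure_map (measurable_circleCoord_prodMk ε).aemeasurable, ?_, ?_⟩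
  · exact (Measure.fst_map_prodMk (measurePreserving_circleCoord_sub ε).measurable).trans
      measurePreserving_circleCoord.map_eq
  · exact (Measure.snd_map_prodMk measurePreserving_circleCoord.measurable).trans
      (measurePreserving_circleCoord_sub ε).map_eq

lemma mI_setOf_coe_le_le_ofReal (ε : ℝ) : mI {x | (x : ℝ) ≤ ε} ≤ ENNReal.ofReal ε := by
  calc mI {x | (x : ℝ) ≤ ε} = volume (Subtype.val '' {x : unitInterval | (x : ℝ) ≤ ε}) :=
        unitInterval.volume_apply
    _ ≤ volume (Icc 0 ε) := measure_mono (image_subset_iff.2 fun x hx ↦ ⟨x.2.1, hx⟩)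
    _ = ENNReal.ofReal ε := by rw [Real.volume_Icc, sub_zero]

lemma rotationCoupling_Sle_le_ofReal {ε : ℝ} (hε : 0 < ε) :
    rotationCoupling ε Sle ≤ ENNReal.ofReal ε := by
  calc rotationCoupling ε Sle
      = volume {t : UnitAddCircle | circleCoord t ≤ circleCoord (t - ε)} :=
        Measure.map_apply (measurable_circleCoord_prodMk ε) measSle
    _ ≤ volume (circleCoord ⁻¹' {x | (x : ℝ) ≤ ε}) :=
        measure_mono fun t ht ↦ not_lt.1 fun hlt ↦ ht.not_gt (circleCoord_sub_lt hε hlt)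
    _ = mI {x | (x : ℝ) ≤ ε} :=
        measurePreserving_circleCoord.measure_preimage
          (measurableSet_le measurable_subtype_coe measurable_const).nullMeasurableSet
    _ ≤ ENNReal.ofReal ε := mI_setOf_coe_le_le_ofReal ε

lemma iInf_measure_Sle_eq_zero : ⨅ Q : sigmaAdditiveCouplings, Q.1 Sle = 0 := by
  refine le_antisymm (ENNReal.le_of_forall_pos_le_add fun ε hε _ ↦ ?_) zero_le
  calc ⨅ Q : sigmaAdditiveCouplings, Q.1 Sle
      ≤ rotationCoupling ε Sle :=
        iInf_le (fun Q : sigmaAdditiveCouplings ↦ Q.1 Sle)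
          ⟨_, rotationCoupling_mem_sigmaAdditiveCouplings ε⟩
    _ ≤ ENNReal.ofReal ε := rotationCoupling_Sle_le_ofReal hε
    _ = 0 + ε := by rw [ENNReal.ofReal_coe_nnreal, zero_add]

lemma Sle_eq_compl_Sgt : Sle = Sgtᶜ := by
  ext p
  simp only [Sle, Sgt, mem_ofPred_eq, mem_compl_iff, not_lt]

lemma IsFAP.apply_Sle {P : MSet (unitInterval × unitInterval) → unitInterval} (hP : IsFAP P) :
    (P ⟨Sle, measSle⟩ : ℝ) = 1 - P ⟨Sgt, measSgt⟩ := by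
  simpa only [Sle_eq_compl_Sgt] using hP.apply_compl ⟨Sgt, measSgt⟩

lemma exists_mem_finitelyAdditiveCouplings_apply_Sle_eq_zero :
    ∃ P ∈ finitelyAdditiveCouplings, (P ⟨Sle, measSle⟩ : ℝ) = 0 := by
  have rotation_mem (ε : ℝ) : ∃ Q ∈ finitelyAdditiveCouplings,
      (Q ⟨Sle, measSle⟩ : ℝ) = (rotationCoupling ε).real Sle := by
    obtain ⟨hprob, hfst, hsnd⟩ := rotationCoupling_mem_sigmaAdditiveCouplings ε
    exact ⟨_, toFAP_mem_finitelyAdditiveCouplings hfst hsnd, rfl⟩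
  have nonempty : finitelyAdditiveCouplings.Nonempty := (rotation_mem 1).imp fun _ ↦ And.left
  obtain ⟨P, hP, hmin⟩ := isCompact_finitelyAdditiveCouplings.exists_isMinOn nonempty
    (continuous_apply (⟨Sle, measSle⟩ : MSet _)).continuousOn
  refine ⟨P, hP, le_antisymm (le_of_forall_pos_le_add fun ε hε ↦ ?_) (P _).2.1⟩
  obtain ⟨Q, hQ, hQ_Sle⟩ := rotation_mem ε
  calc (P ⟨Sle, measSle⟩ : ℝ) ≤ Q ⟨Sle, measSle⟩ := hmin hQ
    _ = (rotationCoupling ε).real Sle := hQ_Sle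
    _ ≤ ε := ENNReal.toReal_le_of_le_ofReal hε.le (rotationCoupling_Sle_le_ofReal hε)
    _ = 0 + ε := (zero_add ε).symm

/-- for `c = 1(π₁ ≤ π₂)` (so that `Q(c) = Q{π₁ ≤ π₂}`):
every σ-additive coupling `Q ∈ Γ` has `Q(c) > 0`, yet `inf_{Q ∈ Γ} Q(c) = 0`, so the
infimum over `Γ` is not attained; in contrast, any finitely additive `P ∈ M` with
`P(π₁ > π₂) = 1` satisfies `P(c) = 0` and minimizes `Q(c)` over `M`, so the infimum
over `M` equals `0` and is attained. -/
theorem indicator_le_inf_not_attained_sigma_additive :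
    (∀ Q : Measure (unitInterval × unitInterval), IsProbabilityMeasure Q →
      Q.map Prod.fst = mI → Q.map Prod.snd = mI → 0 < Q Sle) ∧
    ((⨅ Q : {Q : Measure (unitInterval × unitInterval) // IsProbabilityMeasure Q ∧
        Q.map Prod.fst = mI ∧ Q.map Prod.snd = mI}, Q.1 Sle) = 0) ∧
    (¬ ∃ Q : Measure (unitInterval × unitInterval),
      (IsProbabilityMeasure Q ∧ Q.map Prod.fst = mI ∧ Q.map Prod.snd = mI) ∧
        Q Sle = 0) ∧
    (∃ P : MSet (unitInterval × unitInterval) → unitInterval,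
      IsFAP P ∧ HasLebesgueMarginals P ∧ (P ⟨Sgt, measSgt⟩ : ℝ) = 1) ∧
    (∀ P : MSet (unitInterval × unitInterval) → unitInterval,
      IsFAP P → HasLebesgueMarginals P → (P ⟨Sgt, measSgt⟩ : ℝ) = 1 →
        (P ⟨Sle, measSle⟩ : ℝ) = 0 ∧
        ∀ Q : MSet (unitInterval × unitInterval) → unitInterval,
          IsFAP Q → HasLebesgueMarginals Q →
            (P ⟨Sle, measSle⟩ : ℝ) ≤ (Q ⟨Sle, measSle⟩ : ℝ)) := by
  refine ⟨fun Q hQ hfst hsnd ↦ measure_Sle_pos ⟨hQ, hfst, hsnd⟩, iInf_measure_Sle_eq_zero,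
    fun ⟨Q, hQ, hzero⟩ ↦ (measure_Sle_pos hQ).ne' hzero, ?_, fun P hP _ hSgt ↦ ?_⟩
  · obtain ⟨P, ⟨hP, hmarg⟩, hzero⟩ := exists_mem_finitelyAdditiveCouplings_apply_Sle_eq_zero
    exact ⟨P, hP, hmarg, by linarith [hP.apply_Sle]⟩
  · have hzero : (P ⟨Sle, measSle⟩ : ℝ) = 0 := by rw [hP.apply_Sle, hSgt, sub_self]
    exact ⟨hzero, fun Q _ _ ↦ hzero.trans_le (Q _).2.1⟩

end FATransport
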